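/- Let S ⊆ ℝ² be a finite set whose pairwise distances are all distinct, and let R ⊆ S be the set of all r-points of pairs in Φ* and R' ⊆ S the set of all r'-points of pairs in Φ*. Then R ∩ R' = ∅; in particular, every pair in Φ* has exactly one point in R and one point in R', so the graph on vertex set S with edge set Φ* is bipartite. -/

import Mathlib

/-!
In the oblique coordinates `u = y`, `v = x - α y` the co-wedge is `{u ≤ 0} ∪ {v ≤ 0}`, a union of
two halfplanes. If `(a, b)` is a closest pair of `S ∩ C_p` and both points lay in one of the two
halfplanes making up `C_p`, then `(a, b)` would be a closest pair of `S` in that halfplane. So for a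
pair of `Φ*` one point `x` lies only in the `u`-halfplane and the other point `y` only in the
`v`-halfplane (`sepPair_of_phiStar`); in particular `u x < u y` and `v y < v x`, so `x` is the
`r`-point and `y` is the `r'`-point.

Suppose a point `x` is the `r`-point of a pair `{x, b}` with co-wedge `C_p` and the `r'`-point of a
pair `{c, x}` with co-wedge `C_q`. Then `u c < u x` and `v b < v x`, hence `c ∈ C_p` and `b ∈ C_q`,
so both co-wedges contain `b`, `c` and `x`. Minimality in each of them gives `dist x b = dist c x`,
and distinctness of the distances forces `b = c`, contradicting `u c < u x < u b`
(`SepPair.not_chain`).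
-/


open EuclideanGeometry

noncomputable section

/-- The Euclidean plane `ℝ²`. -/
abbrev Pt := EuclideanSpace ℝ (Fin 2)

/-- The translate `Γ_p = p + Γ` of a set `Γ ⊆ ℝ²`. -/
def tr (p : Pt) (Γ : Set Pt) : Set Pt := (p + ·) '' Γ
/-- `(a, b)` is a closest pair of the set `T`: `a, b` are distinct points of `T` whose distance
is at most the distance between any two distinct points of `T`. -/
def IsClosestPair (T : Set Pt) (a b : Pt) : Prop :=
  a ∈ T ∧ b ∈ T ∧ a ≠ b ∧ ∀ x ∈ T, ∀ y ∈ T, x ≠ y → dist a b ≤ dist x y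

/-- `Φ(S, 𝒳)`: the set of candidate pairs of `S` with respect to the family of ranges `𝒳`,
i.e. pairs that are a closest pair of `S ∩ X` for some `X ∈ 𝒳`. -/
def CandPairs (S : Set Pt) (𝒳 : Set (Set Pt)) : Set (Pt × Pt) :=
  {φ | ∃ X ∈ 𝒳, IsClosestPair (S ∩ X) φ.1 φ.2}

/-- `L_Γ`: the collection of all translates of `Γ`. -/
def Translates (Γ : Set Pt) : Set (Set Pt) := {X | ∃ p : Pt, X = tr p Γ}

/-- The segments `[a,b]` and `[a',b']` cross: the open segments have a common point. -/
def SegCross (a b a' b' : Pt) : Prop :=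
  (openSegment ℝ a b ∩ openSegment ℝ a' b').Nonempty

/-- All pairwise distances of points of `S` are distinct. -/
def DistinctDists (S : Set Pt) : Prop :=
  ∀ a ∈ S, ∀ b ∈ S, ∀ c ∈ S, ∀ d ∈ S,
    a ≠ b → c ≠ d → dist a b = dist c d → ({a, b} : Set Pt) = {c, d}

/-- No three points of `S` are collinear. -/
def NoThreeCollinear (S : Set Pt) : Prop :=
  ∀ a ∈ S, ∀ b ∈ S, ∀ c ∈ S, a ≠ b → a ≠ c → b ≠ c →
    ¬ Collinear ℝ ({a, b, c} : Set Pt)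
/-- `tr p W` is the smallest `W`-translate (under inclusion) containing the set `A`. -/
def IsSmallestTrans (W A : Set Pt) (p : Pt) : Prop :=
  A ⊆ tr p W ∧ ∀ q : Pt, A ⊆ tr q W → tr p W ⊆ tr q W
/-- A closed halfplane in `ℝ²`. -/
def IsClosedHalfplane (H : Set Pt) : Prop :=
  ∃ (f : Pt →ₗ[ℝ] ℝ) (c : ℝ), f ≠ 0 ∧ H = {x | f x ≤ c}
/-- The point `(x, y) ∈ ℝ²`. -/
def pt2 (x y : ℝ) : Pt := (EuclideanSpace.equiv (Fin 2) ℝ).symm ![x, y]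

/-- The co-wedge `C = {(x,y) : y ≤ 0} ∪ {(x,y) : x ≤ αy}`, with vertex at the origin. -/
def coWedge (α : ℝ) : Set Pt := {z | z 1 ≤ 0 ∨ z 0 ≤ α * z 1}

/-- The complementary wedge `W = {(x,y) : y ≥ 0} ∩ {(x,y) : x ≥ αy}`. -/
def compWedge (α : ℝ) : Set Pt := {z | 0 ≤ z 1 ∧ α * z 1 ≤ z 0}

/-- The branch `r = {(t, 0) : t ≥ 0}`. -/
def rBr : Set Pt := {z | ∃ t : ℝ, 0 ≤ t ∧ z = pt2 t 0}

/-- The branch `r' = {(αt, t) : t ≥ 0}`. -/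
def r'Br (α : ℝ) : Set Pt := {z | ∃ t : ℝ, 0 ≤ t ∧ z = pt2 (α * t) t}

/-- `ℋ`: the family of all closed halfplanes in `ℝ²`. -/
def Halfplanes : Set (Set Pt) := {H | IsClosedHalfplane H}

/-- `Φ* = Φ(S, L_C) \ Φ(S, ℋ)`. -/
def PhiStar (α : ℝ) (S : Set Pt) : Set (Pt × Pt) :=
  CandPairs S (Translates (coWedge α)) \ CandPairs S Halfplanes

/-- `x` is the `r`-point of the pair `φ`: `x` is one of the two points of `φ` and lies on the
branch `p + r` of the smallest `W`-translate containing the two points of `φ`. -/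
def IsRPoint (α : ℝ) (φ : Pt × Pt) (x : Pt) : Prop :=
  x ∈ ({φ.1, φ.2} : Set Pt) ∧
    ∃ p : Pt, IsSmallestTrans (compWedge α) {φ.1, φ.2} p ∧ x ∈ tr p rBr

/-- `x` is the `r'`-point of the pair `φ`: `x` is one of the two points of `φ` and lies on the
branch `p + r'` of the smallest `W`-translate containing the two points of `φ`. -/
def IsR'Point (α : ℝ) (φ : Pt × Pt) (x : Pt) : Prop :=
  x ∈ ({φ.1, φ.2} : Set Pt) ∧
    ∃ p : Pt, IsSmallestTrans (compWedge α) {φ.1, φ.2} p ∧ x ∈ tr p (r'Br α)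

/-- The oblique coordinate `v = x - α y`; together with `u = y` it describes the co-wedge as
`{u ≤ 0} ∪ {v ≤ 0}`. -/
def vCoord (α : ℝ) (z : Pt) : ℝ := z 0 - α * z 1

/-- `x, y` form a closest pair of `S ∩ C_p` with `x` only in the halfplane `u ≤ s` and `y` only in
the halfplane `v ≤ t` of `C_p`. The vertex `p` is recorded by its oblique coordinates `s` and
`t`. -/
def SepPair (α : ℝ) (S : Set Pt) (x y : Pt) : Prop :=
  ∃ s t : ℝ, x ∈ S ∧ y ∈ S ∧ x 1 ≤ s ∧ s < y 1 ∧ vCoord α y ≤ t ∧ t < vCoord α x ∧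
    ∀ a ∈ S, ∀ b ∈ S, (a 1 ≤ s ∨ vCoord α a ≤ t) → (b 1 ≤ s ∨ vCoord α b ≤ t) → a ≠ b →
      dist x y ≤ dist a b

lemma mem_tr_iff (p z : Pt) (Γ : Set Pt) : z ∈ tr p Γ ↔ z - p ∈ Γ := by
  constructor
  · rintro ⟨w, hw, rfl⟩
    simpa using hw
  · intro h
    exact ⟨z - p, h, by simp⟩

lemma pt2_zero (x y : ℝ) : pt2 x y 0 = x := rfl

lemma pt2_one (x y : ℝ) : pt2 x y 1 = y := rfl

lemma ext_coords {a b : Pt} (h0 : a 0 = b 0) (h1 : a 1 = b 1) : a = b := by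
  ext i
  fin_cases i
  · exact h0
  · exact h1

lemma mem_tr_coWedge (α : ℝ) (p z : Pt) :
    z ∈ tr p (coWedge α) ↔ z 1 ≤ p 1 ∨ vCoord α z ≤ vCoord α p := by
  rw [mem_tr_iff]
  simp only [coWedge, vCoord, Set.mem_ofPred_eq, PiLp.sub_apply]
  refine or_congr ?_ ?_ <;> constructor <;> intro h <;> linarith

lemma mem_tr_compWedge (α : ℝ) (p z : Pt) :
    z ∈ tr p (compWedge α) ↔ p 1 ≤ z 1 ∧ vCoord α p ≤ vCoord α z := by
  rw [mem_tr_iff]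
  simp only [compWedge, vCoord, Set.mem_ofPred_eq, PiLp.sub_apply]
  refine and_congr ?_ ?_ <;> constructor <;> intro h <;> linarith

lemma mem_tr_rBr (α : ℝ) (p z : Pt) :
    z ∈ tr p rBr ↔ z 1 = p 1 ∧ vCoord α p ≤ vCoord α z := by
  rw [mem_tr_iff]
  constructor
  · rintro ⟨t, ht, h⟩
    have h0 : z 0 - p 0 = t := congrArg (fun w : Pt => w 0) h
    have h1 : z 1 - p 1 = 0 := congrArg (fun w : Pt => w 1) h
    have h2 : z 1 = p 1 := by linarith
    refine ⟨h2, ?_⟩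
    simp only [vCoord, h2]
    linarith
  · rintro ⟨h1, h2⟩
    simp only [vCoord, h1] at h2
    refine ⟨z 0 - p 0, by linarith, ext_coords ?_ ?_⟩
    · simp [pt2_zero]
    · simp [pt2_one, h1]

lemma mem_tr_r'Br (α : ℝ) (p z : Pt) :
    z ∈ tr p (r'Br α) ↔ vCoord α z = vCoord α p ∧ p 1 ≤ z 1 := by
  rw [mem_tr_iff]
  constructor
  · rintro ⟨t, ht, h⟩
    have h0 : z 0 - p 0 = α * t := congrArg (fun w : Pt => w 0) h
    have h1 : z 1 - p 1 = t := congrArg (fun w : Pt => w 1) h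
    refine ⟨?_, by linarith⟩
    simp only [vCoord]
    rw [← h1] at h0
    linarith
  · rintro ⟨h1, h2⟩
    simp only [vCoord] at h1
    refine ⟨z 1 - p 1, by linarith, ext_coords ?_ ?_⟩
    · simp only [pt2_zero, PiLp.sub_apply]
      linarith
    · simp [pt2_one]

lemma isClosedHalfplane_u (c : ℝ) : IsClosedHalfplane {z : Pt | z 1 ≤ c} := by
  refine ⟨(EuclideanSpace.proj (1 : Fin 2) : Pt →L[ℝ] ℝ).toLinearMap, c, ?_, rfl⟩
  intro h
  have h1 : pt2 0 1 1 = 0 := LinearMap.congr_fun h (pt2 0 1)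
  simp [pt2_one] at h1

lemma isClosedHalfplane_v (α c : ℝ) : IsClosedHalfplane {z : Pt | vCoord α z ≤ c} := by
  refine ⟨(EuclideanSpace.proj (0 : Fin 2) : Pt →L[ℝ] ℝ).toLinearMap -
    α • (EuclideanSpace.proj (1 : Fin 2) : Pt →L[ℝ] ℝ).toLinearMap, c, ?_, rfl⟩
  intro h
  have h1 : pt2 1 0 0 - α * pt2 1 0 1 = 0 := LinearMap.congr_fun h (pt2 1 0)
  simp [pt2_one, pt2_zero] at h1

/-- A closest pair stays closest in any smaller range still containing it. -/
lemma IsClosestPair.anti {S X H : Set Pt} {a b : Pt} (h : IsClosestPair (S ∩ X) a b)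
    (hHX : H ⊆ X) (ha : a ∈ H) (hb : b ∈ H) : IsClosestPair (S ∩ H) a b :=
  ⟨⟨h.1.1, ha⟩, ⟨h.2.1.1, hb⟩, h.2.2.1,
    fun x hx y hy hxy => h.2.2.2 x ⟨hx.1, hHX hx.2⟩ y ⟨hy.1, hHX hy.2⟩ hxy⟩

/-- The two points of a pair of `Φ*` lie in different halfplanes of the co-wedge, since otherwise
the pair would be a candidate pair with respect to a halfplane. -/
lemma sepPair_of_phiStar {α : ℝ} {S : Set Pt} {φ : Pt × Pt} (hφ : φ ∈ PhiStar α S) :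
    SepPair α S φ.1 φ.2 ∨ SepPair α S φ.2 φ.1 := by
  obtain ⟨⟨X, ⟨p, rfl⟩, hX⟩, hH⟩ := hφ
  have hu : ¬ (φ.1 1 ≤ p 1 ∧ φ.2 1 ≤ p 1) := fun h =>
    hH ⟨_, isClosedHalfplane_u (p 1),
      hX.anti (fun z hz => (mem_tr_coWedge α p z).2 (Or.inl hz)) h.1 h.2⟩
  have hv : ¬ (vCoord α φ.1 ≤ vCoord α p ∧ vCoord α φ.2 ≤ vCoord α p) := fun h =>
    hH ⟨_, isClosedHalfplane_v α (vCoord α p),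
      hX.anti (fun z hz => (mem_tr_coWedge α p z).2 (Or.inr hz)) h.1 h.2⟩
  obtain ⟨⟨haS, ha⟩, ⟨hbS, hb⟩, -, hmin⟩ := hX
  rw [mem_tr_coWedge] at ha hb
  have hmin' : ∀ a ∈ S, ∀ b ∈ S, (a 1 ≤ p 1 ∨ vCoord α a ≤ vCoord α p) →
      (b 1 ≤ p 1 ∨ vCoord α b ≤ vCoord α p) → a ≠ b → dist φ.1 φ.2 ≤ dist a b :=
    fun a haS b hbS ha hb => hmin a ⟨haS, (mem_tr_coWedge α p a).2 ha⟩ b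
      ⟨hbS, (mem_tr_coWedge α p b).2 hb⟩
  by_cases h : φ.1 1 ≤ p 1
  · have h2 : ¬ φ.2 1 ≤ p 1 := fun h' => hu ⟨h, h'⟩
    have h3 := hb.resolve_left h2
    exact Or.inl ⟨p 1, vCoord α p, haS, hbS, h, not_le.1 h2, h3,
      not_le.1 fun h' => hv ⟨h', h3⟩, hmin'⟩
  · have h3 := ha.resolve_left h
    have h4 : ¬ vCoord α φ.2 ≤ vCoord α p := fun h' => hv ⟨h3, h'⟩
    refine Or.inr ⟨p 1, vCoord α p, hbS, haS, hb.resolve_right h4, not_le.1 h, h3,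
      not_le.1 h4, ?_⟩
    rw [dist_comm]
    exact hmin'

lemma SepPair.u_lt {α : ℝ} {S : Set Pt} {x y : Pt} (h : SepPair α S x y) : x 1 < y 1 := by
  obtain ⟨s, t, -, -, h1, h2, -⟩ := h
  exact h1.trans_lt h2

lemma SepPair.v_lt {α : ℝ} {S : Set Pt} {x y : Pt} (h : SepPair α S x y) :
    vCoord α y < vCoord α x := by
  obtain ⟨s, t, -, -, -, -, h1, h2, -⟩ := h
  exact h1.trans_lt h2

/-- A point cannot be the `u`-smaller point of one separated pair and the `u`-larger point of
another: both co-wedges would contain all three points, so the two distances would agree. -/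
lemma SepPair.not_chain {α : ℝ} {S : Set Pt} (hdd : DistinctDists S) {x b c : Pt}
    (hxb : SepPair α S x b) (hcx : SepPair α S c x) : False := by
  have hub := hxb.u_lt
  have huc := hcx.u_lt
  have hvb := hxb.v_lt
  have nexb : x ≠ b := by rintro rfl; exact lt_irrefl _ hub
  have necx : c ≠ x := by rintro rfl; exact lt_irrefl _ huc
  have necb : c ≠ b := by rintro rfl; exact lt_asymm hub huc
  obtain ⟨s, t, hxS, hbS, h1, -, -, -, hmin⟩ := hxb
  obtain ⟨s', t', hcS, -, -, -, h3', -, hmin'⟩ := hcx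
  have e1 : dist x b ≤ dist c x :=
    hmin c hcS x hxS (Or.inl (huc.le.trans h1)) (Or.inl h1) necx
  have e2 : dist c x ≤ dist x b :=
    hmin' x hxS b hbS (Or.inr h3') (Or.inr (hvb.le.trans h3')) nexb
  have hset := hdd x hxS b hbS c hcS x hxS nexb necx (le_antisymm e1 e2)
  have hc : c ∈ ({x, b} : Set Pt) := by rw [hset]; simp
  rcases hc with hc | hc
  · exact necx hc
  · exact necb hc

/-- The smallest `W`-translate containing two points with `u x ≤ u y` and `v y ≤ v x` has its vertex
at oblique coordinates `(u x, v y)`. -/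
lemma isSmallestTrans_vertex {α : ℝ} {x y : Pt} (hu : x 1 ≤ y 1)
    (hv : vCoord α y ≤ vCoord α x) : ∃ p : Pt, IsSmallestTrans (compWedge α) {x, y} p ∧
      x ∈ tr p rBr ∧ y ∈ tr p (r'Br α) := by
  have hp1 : pt2 (vCoord α y + α * x 1) (x 1) 1 = x 1 := rfl
  have hpv : vCoord α (pt2 (vCoord α y + α * x 1) (x 1)) = vCoord α y := by
    simp [vCoord, pt2_zero, pt2_one]
  refine ⟨pt2 (vCoord α y + α * x 1) (x 1), ⟨?_, ?_⟩, ?_, ?_⟩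
  · rintro z (rfl | rfl) <;> rw [mem_tr_compWedge, hp1, hpv]
    · exact ⟨le_rfl, hv⟩
    · exact ⟨hu, le_rfl⟩
  · intro q hq z hz
    rw [mem_tr_compWedge, hp1, hpv] at hz
    have hx := (mem_tr_compWedge α q x).1 (hq (by simp))
    have hy := (mem_tr_compWedge α q y).1 (hq (by simp))
    exact (mem_tr_compWedge α q z).2 ⟨hx.1.trans hz.1, hy.2.trans hz.2⟩
  · rw [mem_tr_rBr α, hp1, hpv]
    exact ⟨rfl, hv⟩
  · rw [mem_tr_r'Br, hp1, hpv]
    exact ⟨rfl, hu⟩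

lemma IsRPoint.u_le {α : ℝ} {φ : Pt × Pt} {x : Pt} (h : IsRPoint α φ x) :
    x 1 ≤ φ.1 1 ∧ x 1 ≤ φ.2 1 := by
  obtain ⟨-, p, ⟨hp, -⟩, hx⟩ := h
  rw [((mem_tr_rBr α p x).1 hx).1]
  exact ⟨((mem_tr_compWedge α p _).1 (hp (by simp))).1,
    ((mem_tr_compWedge α p _).1 (hp (by simp))).1⟩

lemma IsR'Point.v_le {α : ℝ} {φ : Pt × Pt} {x : Pt} (h : IsR'Point α φ x) :
    vCoord α x ≤ vCoord α φ.1 ∧ vCoord α x ≤ vCoord α φ.2 := by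
  obtain ⟨-, p, ⟨hp, -⟩, hx⟩ := h
  rw [((mem_tr_r'Br α p x).1 hx).1]
  exact ⟨((mem_tr_compWedge α p _).1 (hp (by simp))).2,
    ((mem_tr_compWedge α p _).1 (hp (by simp))).2⟩

lemma IsRPoint.exists_sepPair {α : ℝ} {S : Set Pt} {φ : Pt × Pt} {x : Pt}
    (hφ : φ ∈ PhiStar α S) (h : IsRPoint α φ x) : ∃ y, SepPair α S x y := by
  obtain ⟨h1, h2⟩ := h.u_le
  rcases sepPair_of_phiStar hφ with hs | hs <;> rcases h.1 with rfl | rfl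
  · exact ⟨_, hs⟩
  · exact absurd hs.u_lt (not_lt.2 h1)
  · exact absurd hs.u_lt (not_lt.2 h2)
  · exact ⟨_, hs⟩

lemma IsR'Point.exists_sepPair {α : ℝ} {S : Set Pt} {φ : Pt × Pt} {x : Pt}
    (hφ : φ ∈ PhiStar α S) (h : IsR'Point α φ x) : ∃ y, SepPair α S y x := by
  obtain ⟨h1, h2⟩ := h.v_le
  rcases sepPair_of_phiStar hφ with hs | hs <;> rcases h.1 with rfl | rfl
  · exact absurd hs.v_lt (not_lt.2 h2)
  · exact ⟨_, hs⟩
  · exact ⟨_, hs⟩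
  · exact absurd hs.v_lt (not_lt.2 h1)

/-- Let `R` be the set of `r`-points of pairs of `Φ*` and `R'` the set of
`r'`-points.  Then `R ∩ R' = ∅`, and every pair of `Φ*` has exactly one point in `R` and one
point in `R'` (so the graph on `S` with edge set `Φ*` is bipartite). -/
theorem stmt7 (α : ℝ) (S : Set Pt) (hS : S.Finite) (hdd : DistinctDists S) :
    ({x : Pt | ∃ φ ∈ PhiStar α S, IsRPoint α φ x} ∩
      {x : Pt | ∃ φ ∈ PhiStar α S, IsR'Point α φ x} = ∅) ∧
    ∀ φ ∈ PhiStar α S,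
      (IsRPoint α φ φ.1 ∧ IsR'Point α φ φ.2) ∨
      (IsRPoint α φ φ.2 ∧ IsR'Point α φ φ.1) := by
  refine ⟨?_, fun φ hφ => ?_⟩
  · refine Set.eq_empty_iff_forall_notMem.2 ?_
    rintro x ⟨⟨φ, hφ, hr⟩, ⟨ψ, hψ, hr'⟩⟩
    obtain ⟨b, hb⟩ := hr.exists_sepPair hφ
    obtain ⟨c, hc⟩ := hr'.exists_sepPair hψ
    exact hb.not_chain hdd hc
  · rcases sepPair_of_phiStar hφ with hs | hs
    · obtain ⟨p, hp, h1, h2⟩ := isSmallestTrans_vertex hs.u_lt.le hs.v_lt.le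
      exact Or.inl ⟨⟨by simp, p, hp, h1⟩, ⟨by simp, p, hp, h2⟩⟩
    · obtain ⟨p, hp, h1, h2⟩ := isSmallestTrans_vertex hs.u_lt.le hs.v_lt.le
      rw [Set.pair_comm] at hp
      exact Or.inr ⟨⟨by simp, p, hp, h1⟩, ⟨by simp, p, hp, h2⟩⟩
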